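/- Let X be a Tychonoff space and let λ, μ ∈ Ψ with μ ⊆ λ. If the bitopological space (C(X), τ_μ, τ_λ) has countable (τ_λ, τ_μ)-T-tightness, then for each uncountable regular cardinal κ and each increasing κ-indexed sequence (𝒰_α : α < κ) of families of cozero subsets of X such that ⋃_{α<κ} 𝒰_α is a λ-f-cover of X, there exists β < κ such that 𝒰_β is a μ-f-cover of X. -/

import Mathlib

open Set Filter Topology TopologicalSpace ContinuousMap

/-- A subset `A` of `X` is *C-compact* if `f '' A` is compact in `ℝ` for every
continuous real-valued function `f` on `X`. -/
def IsCCompact {X : Type*} [TopologicalSpace X] (A : Set X) : Prop :=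
  ∀ f : C(X, ℝ), IsCompact (f '' A)

/-- The `λ`-open (set-open) topology on `C(X, ℝ)`, generated by the subbasic sets
`[F, U] = {f : f '' F ⊆ U}` for `F ∈ lam` and `U ⊆ ℝ` open. -/
def setOpenTopology {X : Type*} [TopologicalSpace X] (lam : Set (Set X)) :
    TopologicalSpace C(X, ℝ) :=
  TopologicalSpace.generateFrom
    {S | ∃ F ∈ lam, ∃ U : Set ℝ, IsOpen U ∧ S = {f : C(X, ℝ) | f '' F ⊆ U}}

/-- Membership in the collection `Ψ`: a family of nonempty closed C-compact subsets of `X`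
forming a π-network, hereditary with respect to (closed) C-compact subsets of its elements,
and maximal among families of nonempty sets inducing the same set-open topology. -/
structure MemPsi {X : Type*} [TopologicalSpace X] (lam : Set (Set X)) : Prop where
  nonempty : ∀ A ∈ lam, A.Nonempty
  closed : ∀ A ∈ lam, IsClosed A
  ccompact : ∀ A ∈ lam, IsCCompact A
  piNetwork : ∀ U : Set X, IsOpen U → U.Nonempty → ∃ A ∈ lam, A ⊆ U
  hereditary : ∀ A ∈ lam, ∀ B : Set X, B ⊆ A → B.Nonempty → IsClosed B → IsCCompact B →
    B ∈ lam
  maximal : ∀ lam' : Set (Set X), (∀ A ∈ lam', A.Nonempty) →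
    setOpenTopology lam' = setOpenTopology lam → lam' ⊆ lam

/-- A cozero (functional open) subset of `X`: the complement of a zero-set. -/
def IsCozero {X : Type*} [TopologicalSpace X] (U : Set X) : Prop :=
  ∃ f : C(X, ℝ), U = {x | f x ≠ 0}

/-- `𝒰` is a `λ`-f-cover: a family of cozero sets, not containing `X`, such that every
member of `lam` is contained in some member of `𝒰`. -/
def IsFCover {X : Type*} [TopologicalSpace X] (lam : Set (Set X)) (𝒰 : Set (Set X)) : Prop :=
  (Set.univ : Set X) ∉ 𝒰 ∧ (∀ U ∈ 𝒰, IsCozero U) ∧ ∀ A ∈ lam, ∃ U ∈ 𝒰, A ⊆ U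

/-- `Λ(λ)`: the collection of all `λ`-f-covers of `X`. -/
def fCovers {X : Type*} [TopologicalSpace X] (lam : Set (Set X)) : Set (Set (Set X)) :=
  {𝒰 | IsFCover lam 𝒰}

/-- The selection principle `S₁(𝒜, ℬ)`. -/
def S1 {α : Type*} (𝒜 ℬ : Set (Set α)) : Prop :=
  ∀ A : ℕ → Set α, (∀ n, A n ∈ 𝒜) →
    ∃ b : ℕ → α, (∀ n, b n ∈ A n) ∧ Set.range b ∈ ℬ

/-- The selection principle `S_fin(𝒜, ℬ)`. -/
def Sfin {α : Type*} (𝒜 ℬ : Set (Set α)) : Prop :=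
  ∀ A : ℕ → Set α, (∀ n, A n ∈ 𝒜) →
    ∃ B : ℕ → Set α, (∀ n, (B n).Finite ∧ B n ⊆ A n) ∧ (⋃ n, B n) ∈ ℬ

/-- `Ω_y` with respect to the topology `t`: sets having `y` in their closure but not
containing `y`. -/
def OmegaPt {Y : Type*} (t : TopologicalSpace Y) (y : Y) : Set (Set Y) :=
  {A | y ∈ @closure Y t A ∧ y ∉ A}

/-- Countable `(t₁, t₂)`-tightness of a bitopological space. -/
def CountableBiTightness {Y : Type*} (t1 t2 : TopologicalSpace Y) : Prop :=
  ∀ A : Set Y, ∀ f ∈ @closure Y t1 A, ∃ B ⊆ A, B.Countable ∧ f ∈ @closure Y t2 B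

/-- `X` is `λ`-`μ`-Lindelöf: every `λ`-f-cover has a countable subfamily which is a
`μ`-f-cover. -/
def LamMuLindelof {X : Type*} [TopologicalSpace X] (lam mu : Set (Set X)) : Prop :=
  ∀ 𝒰 : Set (Set X), IsFCover lam 𝒰 → ∃ 𝒱 ⊆ 𝒰, 𝒱.Countable ∧ IsFCover mu 𝒱

/-- Countable `(t₁, t₂)`-T-tightness: for every uncountable regular cardinal `κ` and every
increasing `κ`-indexed sequence of `t₁`-closed sets, the union is `t₂`-closed. -/
def CountableBiTTightness {Y : Type*} (t1 t2 : TopologicalSpace Y) : Prop :=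
  ∀ κ : Cardinal.{0}, Cardinal.aleph0 < κ → κ.IsRegular →
    ∀ A : κ.ord.ToType → Set Y, Monotone A → (∀ α, @IsClosed Y t1 (A α)) →
      @IsClosed Y t2 (⋃ α, A α)

/-- `X` is separably `λ`-submetrizable: there is a continuous map of `X` onto a separable
metric space which is one-to-one on `⋃ lam`. -/
def SeparablyLamSubmetrizable (X : Type*) [TopologicalSpace X] (lam : Set (Set X)) : Prop :=
  ∃ (Y : Type) (m : MetricSpace Y),
    @SeparableSpace Y m.toPseudoMetricSpace.toUniformSpace.toTopologicalSpace ∧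
    ∃ f : X → Y,
      @Continuous X Y _ m.toPseudoMetricSpace.toUniformSpace.toTopologicalSpace f ∧
      Function.Surjective f ∧ Set.InjOn f (⋃₀ lam)

/-- `R`-separability for a pair of topologies: from every sequence of `t₁`-dense sets one
can pick single points forming a `t₂`-dense set. -/
def RSepBi {Y : Type*} (t1 t2 : TopologicalSpace Y) : Prop :=
  ∀ D : ℕ → Set Y, (∀ n, @Dense Y t1 (D n)) →
    ∃ d : ℕ → Y, (∀ n, d n ∈ D n) ∧ @Dense Y t2 (Set.range d)

/-- `M`-separability for a pair of topologies. -/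
def MSepBi {Y : Type*} (t1 t2 : TopologicalSpace Y) : Prop :=
  ∀ D : ℕ → Set Y, (∀ n, @Dense Y t1 (D n)) →
    ∃ F : ℕ → Set Y, (∀ n, (F n).Finite ∧ F n ⊆ D n) ∧ @Dense Y t2 (⋃ n, F n)

/-- `H`-separability for a pair of topologies. -/
def HSepBi {Y : Type*} (t1 t2 : TopologicalSpace Y) : Prop :=
  ∀ D : ℕ → Set Y, (∀ n, @Dense Y t1 (D n)) →
    ∃ F : ℕ → Set Y, (∀ n, (F n).Finite ∧ F n ⊆ D n) ∧
      ∀ G : Set Y, @IsOpen Y t2 G → G.Nonempty →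
        ∀ᶠ n in Filter.atTop, (G ∩ F n).Nonempty

/-- A countable set `D` is groupable with respect to the topology `t`. -/
def GroupableIn {Y : Type*} (t : TopologicalSpace Y) (D : Set Y) : Prop :=
  ∃ A : ℕ → Set Y, (∀ n, (A n).Finite) ∧ D = ⋃ n, A n ∧
    ∀ G : Set Y, @IsOpen Y t G → G.Nonempty →
      ∀ᶠ n in Filter.atTop, (G ∩ A n).Nonempty

/-- `GN`-separability for a pair of topologies. -/
def GNSepBi {Y : Type*} (t1 t2 : TopologicalSpace Y) : Prop :=
  ∀ D : ℕ → Set Y, (∀ n, @Dense Y t1 (D n)) →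
    ∃ d : ℕ → Y, (∀ n, d n ∈ D n) ∧ @Dense Y t2 (Set.range d) ∧
      GroupableIn t2 (Set.range d)

/-- The `(t₁, t₂)`-Pytkeev property for a bitopological space. -/
def PytkeevBi {Y : Type*} (t1 t2 : TopologicalSpace Y) : Prop :=
  ∀ A : Set Y, ∀ g ∈ @closure Y t1 A, g ∉ A →
    ∃ B : ℕ → Set Y, (∀ n, (B n).Infinite ∧ B n ⊆ A) ∧
      ∀ G ∈ @nhds Y t2 g, ∃ n, B n ⊆ G

/-- A groupable `μ`-f-cover. -/
def GroupableFCover {X : Type*} [TopologicalSpace X] (mu 𝒱 : Set (Set X)) : Prop :=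
  𝒱.Countable ∧ IsFCover mu 𝒱 ∧
    ∃ G : ℕ → Set (Set X), (∀ m, (G m).Finite) ∧
      (Pairwise fun m k => Disjoint (G m) (G k)) ∧ 𝒱 = ⋃ m, G m ∧
      ∀ F ∈ mu, ∀ᶠ m in Filter.atTop, ∃ U ∈ G m, F ⊆ U

theorem MemPsi.union_mem {X : Type*} [TopologicalSpace X] {lam : Set (Set X)}
    (hlam : MemPsi lam) {A B : Set X} (hA : A ∈ lam) (hB : B ∈ lam) : A ∪ B ∈ lam := by
  refine hlam.maximal (insert (A ∪ B) lam) ?_ ?_ (Set.mem_insert _ _)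
  · rintro C (rfl | hC)
    · exact (hlam.nonempty A hA).mono Set.subset_union_left
    · exact hlam.nonempty C hC
  · apply le_antisymm
    · apply TopologicalSpace.generateFrom_anti
      rintro S ⟨F, hF, U, hU, rfl⟩
      exact ⟨F, Set.mem_insert_of_mem _ hF, U, hU, rfl⟩
    · refine le_generateFrom ?_
      rintro S ⟨F, hF, U, hU, rfl⟩
      rcases hF with rfl | hF
      · have e : {f : C(X, ℝ) | f '' (A ∪ B) ⊆ U} =
            {f : C(X, ℝ) | f '' A ⊆ U} ∩ {f : C(X, ℝ) | f '' B ⊆ U} := by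
          ext f
          simp only [Set.mem_setOf_eq, Set.image_union, Set.union_subset_iff, Set.mem_inter_iff]
        rw [e]
        exact @IsOpen.inter _ (setOpenTopology lam) _ _
          (TopologicalSpace.isOpen_generateFrom_of_mem ⟨A, hA, U, hU, rfl⟩)
          (TopologicalSpace.isOpen_generateFrom_of_mem ⟨B, hB, U, hU, rfl⟩)
      · exact TopologicalSpace.isOpen_generateFrom_of_mem ⟨F, hF, U, hU, rfl⟩

theorem MemPsi.exists_zero_nhd {X : Type*} [TopologicalSpace X] {mu : Set (Set X)}
    (hmu : MemPsi mu) (hne : mu.Nonempty) (W : Set C(X, ℝ))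
    (hW : IsOpen[setOpenTopology mu] W) (h0 : (0 : C(X, ℝ)) ∈ W) :
    ∃ F ∈ mu, ∀ f : C(X, ℝ), (∀ x ∈ F, f x = 0) → f ∈ W := by
  change TopologicalSpace.GenerateOpen _ W at hW
  induction hW with
  | basic S hS =>
    obtain ⟨F, hF, U, hU, rfl⟩ := hS
    refine ⟨F, hF, fun f hf => ?_⟩
    rintro _ ⟨x, hx, rfl⟩
    rw [hf x hx]
    exact h0 ⟨x, hx, rfl⟩
  | univ =>
    obtain ⟨F, hF⟩ := hne
    exact ⟨F, hF, fun _ _ => Set.mem_univ _⟩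
  | inter S T _ _ ihS ihT =>
    obtain ⟨F, hF, hF'⟩ := ihS h0.1
    obtain ⟨G, hG, hG'⟩ := ihT h0.2
    exact ⟨F ∪ G, hmu.union_mem hF hG, fun f hf =>
      ⟨hF' f fun x hx => hf x (Or.inl hx), hG' f fun x hx => hf x (Or.inr hx)⟩⟩
  | sUnion S _ ih =>
    obtain ⟨T, hT, h0T⟩ := h0
    obtain ⟨F, hF, hF'⟩ := ih T hT h0T
    exact ⟨F, hF, fun f hf => ⟨T, hT, hF' f hf⟩⟩

theorem IsCCompact.exists_sep {X : Type*} [TopologicalSpace X] {A U : Set X}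
    (hA : IsCCompact A) (hne : A.Nonempty) (hU : IsCozero U) (hAU : A ⊆ U) :
    ∃ f : C(X, ℝ), (∀ x ∈ A, f x = 0) ∧ ∀ x, x ∉ U → f x = 1 := by
  obtain ⟨g, rfl⟩ := hU
  let k : C(X, ℝ) := ⟨fun x => |g x|, g.continuous.abs⟩
  obtain ⟨m, hm, hmin⟩ := (hA k).exists_isLeast (hne.image k)
  obtain ⟨a, ha, rfl⟩ := hm
  have hpos : 0 < |g a| := abs_pos.mpr (hAU ha)
  refine ⟨⟨fun x => 1 - min 1 (|g x| / |g a|), by fun_prop⟩, fun x hx => ?_, fun x hx => ?_⟩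
  · have h1 : |g a| ≤ |g x| := hmin ⟨x, hx, rfl⟩
    have h2 : 1 ≤ |g x| / |g a| := (one_le_div hpos).mpr h1
    simp [min_eq_left h2]
  · have : g x = 0 := by simpa using hx
    simp [this]

/-- For a Tychonoff space `X` and `λ, μ ∈ Ψ` with `μ ⊆ λ`: if the bitopological
space `(C(X), τ_μ, τ_λ)` has countable `(τ_λ, τ_μ)`-T-tightness, then for each uncountable
regular cardinal `κ` and each increasing `κ`-indexed sequence `(𝒰_α : α < κ)` of families of
cozero subsets of `X` whose union is a `λ`-f-cover of `X`, some `𝒰_β` is a `μ`-f-cover of `X`. -/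
theorem tTightness_implies_fCover_selection
    {X : Type*} [TopologicalSpace X] [T35Space X]
    (lam mu : Set (Set X)) (hlam : MemPsi lam) (hmu : MemPsi mu) (hsub : mu ⊆ lam)
    (h : CountableBiTTightness (setOpenTopology lam) (setOpenTopology mu)) :
    ∀ κ : Cardinal.{0}, Cardinal.aleph0 < κ → κ.IsRegular →
      ∀ 𝒰 : κ.ord.ToType → Set (Set X), Monotone 𝒰 →
        (∀ α, ∀ V ∈ 𝒰 α, IsCozero V) →
        IsFCover lam (⋃ α, 𝒰 α) →
        ∃ β, IsFCover mu (𝒰 β) := by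
  intro κ hκ hreg 𝒰 hmono hcoz hcov
  obtain ⟨hX, -, hc⟩ := hcov
  suffices hs : ∃ β, ∀ A ∈ mu, ∃ U ∈ 𝒰 β, A ⊆ U by
    obtain ⟨β, hβ⟩ := hs
    exact ⟨β, fun hu => hX (Set.mem_iUnion.mpr ⟨β, hu⟩), hcoz β, hβ⟩
  rcases mu.eq_empty_or_nonempty with rfl | hne
  · have : Nonempty κ.ord.ToType := by
      rw [← Cardinal.mk_ne_zero_iff, Cardinal.mk_ord_toType]
      exact (Cardinal.aleph0_pos.trans hκ).ne'
    exact ⟨Classical.arbitrary _, fun A hA => hA.elim⟩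
  let B : κ.ord.ToType → Set C(X, ℝ) := fun α => {f | ∃ U ∈ 𝒰 α, ∀ x, x ∉ U → f x = 1}
  have hB : Monotone B := by
    rintro a b hab f ⟨U, hU, hf⟩
    exact ⟨U, hmono hab hU, hf⟩
  have hcl := h κ hκ hreg (fun α => @closure _ (setOpenTopology lam) (B α))
    (fun a b hab => @closure_mono _ (setOpenTopology lam) _ _ (hB hab))
    (fun α => @isClosed_closure _ (setOpenTopology lam) _)
  have h0 : (0 : C(X, ℝ)) ∈ ⋃ α, @closure _ (setOpenTopology lam) (B α) := by
    by_contra hn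
    obtain ⟨F, hF, hFW⟩ := hmu.exists_zero_nhd hne _ hcl.isOpen_compl hn
    obtain ⟨U, hU, hFU⟩ := hc F (hsub hF)
    obtain ⟨α, hα⟩ := Set.mem_iUnion.mp hU
    obtain ⟨f, hf0, hf1⟩ :=
      (hmu.ccompact F hF).exists_sep (hmu.nonempty F hF) (hcoz α U hα) hFU
    exact hFW f hf0 (Set.mem_iUnion.mpr
      ⟨α, @subset_closure _ (setOpenTopology lam) (B α) f ⟨U, hα, hf1⟩⟩)
  obtain ⟨β, hβ⟩ := Set.mem_iUnion.mp h0
  refine ⟨β, fun A hA => ?_⟩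
  have hopen : IsOpen[setOpenTopology lam] {f : C(X, ℝ) | f '' A ⊆ Set.Iio 1} :=
    TopologicalSpace.isOpen_generateFrom_of_mem ⟨A, hsub hA, _, isOpen_Iio, rfl⟩
  obtain ⟨f, hfA, U, hU, hf⟩ :=
    (@mem_closure_iff _ (setOpenTopology lam) _ _).mp hβ _ hopen (by
      rintro _ ⟨x, _, rfl⟩
      simp)
  refine ⟨U, hU, fun x hx => ?_⟩
  by_contra hxU
  have h1 : f x < 1 := hfA ⟨x, hx, rfl⟩
  rw [hf x hxU] at h1
  exact lt_irrefl _ h1
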